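/- Let d ≥ 3 be an integer and assume condition (A-1) holds with some index α ∈ [0,2) and condition (A-3) holds. Then the radial profile of the Green function of the subordinate Brownian motion satisfies g(r) ≍ r^{−d−2} φ'(r^{−2}) / φ(r^{−2})² as r → 0+. -/

import Mathlib

open MeasureTheory Set Filter Topology

/-- Differentiation under the integral for Laplace-type integrals. -/
lemma aux_texp (l t : ℝ) (hl : 0 < l) : t * Real.exp (-(l * t)) ≤ 1 / l := by
  have h1 : l * t ≤ Real.exp (l * t) := by linarith [Real.add_one_le_exp (l * t)]
  rw [le_div_iff₀ hl, Real.exp_neg]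
  have := Real.exp_pos (l * t)
  rw [mul_right_comm, ← div_eq_mul_inv, div_le_one this]
  linarith

lemma aux_meas (μ : ℝ → ℝ) (hdec : ∀ s t, 0 < s → s ≤ t → μ t ≤ μ s) :
    AEStronglyMeasurable μ (volume.restrict (Ioi (0:ℝ))) :=
  (aemeasurable_restrict_of_antitoneOn measurableSet_Ioi
    (fun s hs t _ hst => hdec s t hs hst)).aestronglyMeasurable

lemma aux_phi_int (μ : ℝ → ℝ) (hpos : ∀ t, 0 < t → 0 < μ t)
    (hdec : ∀ s t, 0 < s → s ≤ t → μ t ≤ μ s)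
    (hint : IntegrableOn (fun t => min 1 t * μ t) (Ioi 0)) (l : ℝ) (hl : 0 < l) :
    IntegrableOn (fun t => (1 - Real.exp (-(l * t))) * μ t) (Ioi 0) := by
  refine Integrable.mono' (hint.const_mul (1 + l)) ?_ ?_
  · exact (by fun_prop : Continuous fun t : ℝ => 1 - Real.exp (-(l * t))).aestronglyMeasurable.mul
      (aux_meas μ hdec)
  · refine (ae_restrict_mem measurableSet_Ioi).mono fun t ht => ?_
    have ht : 0 < t := ht
    have h0 : Real.exp (-(l * t)) ≤ 1 := Real.exp_le_one_iff.2 (by nlinarith)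
    have h1 := Real.add_one_le_exp (-(l * t))
    have h2 := Real.exp_pos (-(l * t))
    rw [Real.norm_of_nonneg (mul_nonneg (by linarith) (hpos t ht).le), ← mul_assoc]
    refine mul_le_mul_of_nonneg_right ?_ (hpos t ht).le
    rcases le_total 1 t with h | h
    · rw [min_eq_left h]; linarith
    · rw [min_eq_right h]; nlinarith

lemma aux_phi'_int (μ : ℝ → ℝ) (hpos : ∀ t, 0 < t → 0 < μ t)
    (hdec : ∀ s t, 0 < s → s ≤ t → μ t ≤ μ s)
    (hint : IntegrableOn (fun t => min 1 t * μ t) (Ioi 0)) (l : ℝ) (hl : 0 < l) :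
    IntegrableOn (fun t => t * Real.exp (-(l * t)) * μ t) (Ioi 0) := by
  refine Integrable.mono' (hint.const_mul (1 + 1 / l)) ?_ ?_
  · exact (by fun_prop : Continuous fun t : ℝ => t * Real.exp (-(l * t))).aestronglyMeasurable.mul
      (aux_meas μ hdec)
  · refine (ae_restrict_mem measurableSet_Ioi).mono fun t ht => ?_
    have ht : 0 < t := ht
    have h0 : Real.exp (-(l * t)) ≤ 1 := Real.exp_le_one_iff.2 (by nlinarith)
    have h1 := aux_texp l t hl
    have h2 := Real.exp_pos (-(l * t))
    have h3 : 0 < 1 / l := by positivity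
    rw [Real.norm_of_nonneg (mul_nonneg (by positivity) (hpos t ht).le), ← mul_assoc]
    refine mul_le_mul_of_nonneg_right ?_ (hpos t ht).le
    rcases le_total 1 t with h | h
    · rw [min_eq_left h]; linarith
    · rw [min_eq_right h]; nlinarith

lemma aux_phi_deriv (μ : ℝ → ℝ) (hpos : ∀ t, 0 < t → 0 < μ t)
    (hdec : ∀ s t, 0 < s → s ≤ t → μ t ≤ μ s)
    (hint : IntegrableOn (fun t => min 1 t * μ t) (Ioi 0)) (l : ℝ) (hl : 0 < l) :
    HasDerivAt (fun l => ∫ t in Ioi (0:ℝ), (1 - Real.exp (-(l * t))) * μ t)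
      (∫ t in Ioi (0:ℝ), t * Real.exp (-(l * t)) * μ t) l := by
  refine (hasDerivAt_integral_of_dominated_loc_of_deriv_le
    (s := Ioi (l / 2)) (bound := fun t => t * Real.exp (-(l / 2 * t)) * μ t)
    (F := fun l t => (1 - Real.exp (-(l * t))) * μ t)
    (F' := fun l t => t * Real.exp (-(l * t)) * μ t)
    (Ioi_mem_nhds (by linarith)) ?_ (aux_phi_int μ hpos hdec hint l hl)
    (aux_phi'_int μ hpos hdec hint l hl).aestronglyMeasurable ?_
    (aux_phi'_int μ hpos hdec hint (l / 2) (by linarith)) ?_).2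
  · filter_upwards [Ioi_mem_nhds hl] with x hx
    exact (aux_phi_int μ hpos hdec hint x hx).aestronglyMeasurable
  · refine (ae_restrict_mem measurableSet_Ioi).mono fun t ht x hx => ?_
    have ht : 0 < t := ht
    have hx : l / 2 < x := hx
    rw [Real.norm_of_nonneg (mul_nonneg (by positivity) (hpos t ht).le)]
    refine mul_le_mul_of_nonneg_right ?_ (hpos t ht).le
    refine mul_le_mul_of_nonneg_left (Real.exp_le_exp.2 ?_) ht.le
    nlinarith
  · refine Eventually.of_forall fun t x _ => ?_
    refine HasDerivAt.mul_const ?_ _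
    have h := (((hasDerivAt_id x).mul_const t).neg.exp).const_sub 1
    refine h.congr_deriv ?_
    simp only [id, Pi.neg_apply]; ring

lemma aux_u_int (u : ℝ → ℝ) (hpos : ∀ t, 0 < t → 0 < u t)
    (hdec : ∀ s t, 0 < s → s ≤ t → u t ≤ u s)
    (hint : ∀ l, 0 < l → IntegrableOn (fun t => Real.exp (-(l * t)) * u t) (Ioi 0))
    (l : ℝ) (hl : 0 < l) :
    IntegrableOn (fun t => t * Real.exp (-(l * t)) * u t) (Ioi 0) := by
  refine Integrable.mono' ((hint (l / 2) (by linarith)).const_mul (1 / (l / 2))) ?_ ?_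
  · exact (by fun_prop : Continuous fun t : ℝ => t * Real.exp (-(l * t))).aestronglyMeasurable.mul
      (aux_meas u hdec)
  · refine (ae_restrict_mem measurableSet_Ioi).mono fun t ht => ?_
    have ht : 0 < t := ht
    have h1 := aux_texp (l / 2) t (by linarith)
    rw [Real.norm_of_nonneg (mul_nonneg (by positivity) (hpos t ht).le), ← mul_assoc]
    refine mul_le_mul_of_nonneg_right ?_ (hpos t ht).le
    have : Real.exp (-(l * t)) = Real.exp (-(l / 2 * t)) * Real.exp (-(l / 2 * t)) := by
      rw [← Real.exp_add]; congr 1; ring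
    rw [this, ← mul_assoc]
    exact mul_le_mul_of_nonneg_right h1 (Real.exp_pos _).le

lemma aux_u_deriv (u : ℝ → ℝ) (hpos : ∀ t, 0 < t → 0 < u t)
    (hdec : ∀ s t, 0 < s → s ≤ t → u t ≤ u s)
    (hint : ∀ l, 0 < l → IntegrableOn (fun t => Real.exp (-(l * t)) * u t) (Ioi 0))
    (l : ℝ) (hl : 0 < l) :
    HasDerivAt (fun l => ∫ t in Ioi (0:ℝ), Real.exp (-(l * t)) * u t)
      (-∫ t in Ioi (0:ℝ), t * Real.exp (-(l * t)) * u t) l := by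
  rw [← integral_neg]
  refine (hasDerivAt_integral_of_dominated_loc_of_deriv_le
    (s := Ioi (l / 2)) (bound := fun t => t * Real.exp (-(l / 2 * t)) * u t)
    (F := fun l t => Real.exp (-(l * t)) * u t)
    (F' := fun l t => -(t * Real.exp (-(l * t)) * u t))
    (Ioi_mem_nhds (by linarith)) ?_ (hint l hl)
    (aux_u_int u hpos hdec hint l hl).aestronglyMeasurable.neg ?_
    (aux_u_int u hpos hdec hint (l / 2) (by linarith)) ?_).2
  · filter_upwards [Ioi_mem_nhds hl] with x hx
    exact (hint x hx).aestronglyMeasurable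
  · refine (ae_restrict_mem measurableSet_Ioi).mono fun t ht x hx => ?_
    have ht : 0 < t := ht
    have hx : l / 2 < x := hx
    rw [norm_neg, Real.norm_of_nonneg (mul_nonneg (by positivity) (hpos t ht).le)]
    refine mul_le_mul_of_nonneg_right ?_ (hpos t ht).le
    refine mul_le_mul_of_nonneg_left (Real.exp_le_exp.2 ?_) ht.le
    nlinarith
  · refine Eventually.of_forall fun t x _ => ?_
    have h := (((hasDerivAt_id x).mul_const t).neg.exp).mul_const (u t)
    refine h.congr_deriv ?_
    simp only [id, Pi.neg_apply]; ring

lemma aux_int_pos (f : ℝ → ℝ) (hf : ∀ t, 0 < t → 0 < f t) (hi : IntegrableOn f (Ioi 0)) :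
    0 < ∫ t in Ioi (0:ℝ), f t := by
  rw [setIntegral_pos_iff_support_of_nonneg_ae _ hi]
  · have : Function.support f ∩ Ioi 0 = Ioi 0 := by
      ext t; simp only [mem_inter_iff, Function.mem_support, mem_Ioi, and_iff_right_iff_imp]
      exact fun h => (hf t h).ne'
    rw [this]; simp
  · exact (ae_restrict_mem measurableSet_Ioi).mono fun t ht => (hf t ht).le

lemma aux_int_id (s : ℝ) (hs : 0 < s) : ∫ t in Ioc 0 s, t = s ^ 2 / 2 := by
  rw [← intervalIntegral.integral_of_le hs.le, integral_id]; ring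

lemma aux_int_texp (s : ℝ) (hs : 0 < s) :
    IntegrableOn (fun t => t * Real.exp (-(1 / s * t))) (Ioi 0) ∧
    ∫ t in Ioi (0:ℝ), t * Real.exp (-(1 / s * t)) = s ^ 2 := by
  have h := Real.integral_rpow_mul_exp_neg_mul_Ioi (a := 2) (r := 1 / s) (by norm_num)
    (by positivity)
  have e : (∫ t in Ioi (0:ℝ), t ^ ((2:ℝ) - 1) * Real.exp (-(1 / s * t)))
      = ∫ t in Ioi (0:ℝ), t * Real.exp (-(1 / s * t)) := by
    norm_num
  have h2 : ∫ t in Ioi (0:ℝ), t * Real.exp (-(1 / s * t)) = s ^ 2 := by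
    rw [← e, h]; simp
  refine ⟨?_, h2⟩
  by_contra hc
  rw [integral_undef hc] at h2
  exact (pow_pos hs 2).ne h2

/-- kernel upper bound -/
lemma aux_ker (d : ℕ) (hd : 3 ≤ d) (s t : ℝ) (ht : 0 < t) (hts : t ≤ s) :
    (4 * Real.pi * t) ^ (-(d:ℝ) / 2) * Real.exp (-(s / (4 * t)))
      ≤ (4 ^ d * d.factorial) * s ^ (-(d:ℝ) / 2 - 1) * t := by
  have hd' : (3:ℝ) ≤ d := by exact_mod_cast hd
  have hs : 0 < s := ht.trans_le hts
  have h1 : (4 * Real.pi * t) ^ (-(d:ℝ) / 2) ≤ t ^ (-(d:ℝ) / 2) := by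
    refine Real.rpow_le_rpow_of_nonpos ht ?_ (by linarith)
    nlinarith [Real.pi_gt_three]
  have hx : 1 ≤ s / t := by rw [le_div_iff₀ ht]; linarith
  have h2 : (s / t) ^ ((d:ℝ) / 2 + 1) ≤ (s / t) ^ d := by
    rw [← Real.rpow_natCast]
    exact Real.rpow_le_rpow_of_exponent_le hx (by linarith)
  have h3 : (s / t) ^ d * Real.exp (-(s / (4 * t))) ≤ 4 ^ d * d.factorial := by
    have h := Real.pow_div_factorial_le_exp (s / (4 * t)) (by positivity) d
    have e : (s / t) ^ d = 4 ^ d * (s / (4 * t)) ^ d := by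
      rw [← mul_pow]; congr 1; field_simp
    rw [div_le_iff₀ (by positivity)] at h
    rw [e, Real.exp_neg, mul_assoc, ← div_eq_mul_inv]
    gcongr
    rw [div_le_iff₀ (Real.exp_pos _)]
    linarith
  have h4 : t ^ (-(d:ℝ) / 2) = (s / t) ^ ((d:ℝ) / 2 + 1) * (s ^ (-(d:ℝ) / 2 - 1) * t) := by
    rw [Real.div_rpow hs.le ht.le, show -(d:ℝ) / 2 - 1 = -((d:ℝ) / 2 + 1) by ring,
      Real.rpow_neg hs.le, show -(d:ℝ) / 2 = -((d:ℝ) / 2 + 1) + 1 by ring,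
      Real.rpow_add_one ht.ne', Real.rpow_neg ht.le]
    have := (Real.rpow_pos_of_pos hs ((d:ℝ) / 2 + 1)).ne'
    field_simp
  calc _ ≤ t ^ (-(d:ℝ) / 2) * Real.exp (-(s / (4 * t))) := by gcongr
    _ = ((s / t) ^ ((d:ℝ) / 2 + 1) * Real.exp (-(s / (4 * t)))) * (s ^ (-(d:ℝ) / 2 - 1) * t) := by
      rw [h4]; ring
    _ ≤ ((s / t) ^ d * Real.exp (-(s / (4 * t)))) * (s ^ (-(d:ℝ) / 2 - 1) * t) := by gcongr
    _ ≤ (4 ^ d * d.factorial) * (s ^ (-(d:ℝ) / 2 - 1) * t) := by gcongr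
    _ = _ := by ring

/-- properties of `u` and the weighted Laplace transform `G`. -/
lemma aux_G (u G : ℝ → ℝ) (hpos : ∀ t, 0 < t → 0 < u t)
    (hdec : ∀ s t, 0 < s → s ≤ t → u t ≤ u s)
    (hint : ∀ l, 0 < l → IntegrableOn (fun t => t * Real.exp (-(l * t)) * u t) (Ioi 0))
    (hG : ∀ l, 0 < l → G l = ∫ t in Ioi (0:ℝ), t * Real.exp (-(l * t)) * u t)
    (s : ℝ) (hs : 0 < s) :
    IntegrableOn (fun t => t * u t) (Ioc 0 s) ∧
    ∫ t in Ioc 0 s, t * u t ≤ 3 * G (1 / s) ∧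
    u s * s ^ 2 ≤ 2 * ∫ t in Ioc 0 s, t * u t ∧
    G (1 / s) ≤ 3 * ∫ t in Ioc 0 s, t * u t := by
  have hs1 : 0 < 1 / s := by positivity
  have hI := hint (1 / s) hs1
  have hsub : Ioc 0 s ⊆ Ioi 0 := Ioc_subset_Ioi_self
  have hsub2 : Ioi s ⊆ Ioi 0 := Ioi_subset_Ioi hs.le
  have hI1 := hI.mono_set hsub
  have hI2 := hI.mono_set hsub2
  have hb : ∀ t ∈ Ioc 0 s, t * u t ≤ 3 * (t * Real.exp (-(1 / s * t)) * u t) := by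
    intro t ht
    have h1 : (1:ℝ) / 3 ≤ Real.exp (-(1 / s * t)) := by
      have h2 : Real.exp (-1) ≤ Real.exp (-(1 / s * t)) := by
        refine Real.exp_le_exp.2 (neg_le_neg ?_)
        rw [one_div_mul_eq_div, div_le_one hs]; exact ht.2
      refine le_trans ?_ h2
      rw [Real.exp_neg, one_div]
      exact inv_anti₀ (Real.exp_pos _) (by linarith [Real.exp_one_lt_d9])
    have h3 : 0 < t * u t := mul_pos ht.1 (hpos t ht.1)
    nlinarith
  have hII : IntegrableOn (fun t => t * u t) (Ioc 0 s) := by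
    refine Integrable.mono' (hI1.const_mul 3) ?_ ?_
    · exact continuous_id.aestronglyMeasurable.mul
        ((aux_meas u hdec).mono_measure (Measure.restrict_mono hsub le_rfl))
    · refine (ae_restrict_mem measurableSet_Ioc).mono fun t ht => ?_
      rw [Real.norm_of_nonneg (mul_pos ht.1 (hpos t ht.1)).le]
      exact hb t ht
  have hsplit : G (1 / s) = (∫ t in Ioc 0 s, t * Real.exp (-(1 / s * t)) * u t)
      + ∫ t in Ioi s, t * Real.exp (-(1 / s * t)) * u t := by
    rw [hG _ hs1, ← Ioc_union_Ioi_eq_Ioi hs.le]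
    exact setIntegral_union (Ioc_disjoint_Ioi le_rfl) measurableSet_Ioi hI1 hI2
  have hp2 : 0 ≤ ∫ t in Ioi s, t * Real.exp (-(1 / s * t)) * u t := by
    refine setIntegral_nonneg measurableSet_Ioi fun t ht => ?_
    have ht : 0 < t := hsub2 ht
    have := hpos t ht
    positivity
  have h1 : ∫ t in Ioc 0 s, t * u t ≤ 3 * ∫ t in Ioc 0 s, t * Real.exp (-(1 / s * t)) * u t := by
    rw [← integral_const_mul]
    exact setIntegral_mono_on hII (hI1.const_mul 3) measurableSet_Ioc hb
  have h2 : u s * s ^ 2 ≤ 2 * ∫ t in Ioc 0 s, t * u t := by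
    have : ∫ t in Ioc 0 s, t * u s ≤ ∫ t in Ioc 0 s, t * u t := by
      refine setIntegral_mono_on ?_ hII measurableSet_Ioc fun t ht => ?_
      · exact (by fun_prop : Continuous fun t => t * u s).integrableOn_Ioc
      · exact mul_le_mul_of_nonneg_left (hdec t s ht.1 ht.2) ht.1.le
    rw [integral_mul_const, aux_int_id s hs] at this
    linarith
  refine ⟨hII, by linarith, h2, ?_⟩
  have h3 : ∫ t in Ioc 0 s, t * Real.exp (-(1 / s * t)) * u t ≤ ∫ t in Ioc 0 s, t * u t := by
    refine setIntegral_mono_on hI1 hII measurableSet_Ioc fun t ht => ?_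
    have h0 : Real.exp (-(1 / s * t)) ≤ 1 :=
      Real.exp_le_one_iff.2 (by have := mul_pos hs1 ht.1; linarith)
    have h3 : 0 < t * u t := mul_pos ht.1 (hpos t ht.1)
    nlinarith
  have h4 : ∫ t in Ioi s, t * Real.exp (-(1 / s * t)) * u t ≤ u s * s ^ 2 := by
    obtain ⟨a1, a2⟩ := aux_int_texp s hs
    calc _ ≤ ∫ t in Ioi s, t * Real.exp (-(1 / s * t)) * u s := by
          refine setIntegral_mono_on hI2 ((a1.mono_set hsub2).mul_const _) measurableSet_Ioi
            fun t ht => ?_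
          have ht0 : 0 < t := hsub2 ht
          exact mul_le_mul_of_nonneg_left (hdec s t hs (le_of_lt ht)) (by positivity)
      _ ≤ ∫ t in Ioi 0, t * Real.exp (-(1 / s * t)) * u s := by
          refine setIntegral_mono_set (a1.mul_const _) ?_ hsub2.eventuallyLE
          refine (ae_restrict_mem measurableSet_Ioi).mono fun t ht => ?_
          have ht0 : 0 < t := ht
          have := hpos s hs
          simp only [Pi.zero_apply]
          positivity
      _ = u s * s ^ 2 := by rw [integral_mul_const, a2, mul_comm]
  linarith

/-- upper bound for `g`, together with integrability. -/
lemma aux_upper (d : ℕ) (hd : 3 ≤ d) (u : ℝ → ℝ) (hpos : ∀ t, 0 < t → 0 < u t)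
    (hdec : ∀ s t, 0 < s → s ≤ t → u t ≤ u s) (s : ℝ) (hs : 0 < s)
    (hII : IntegrableOn (fun t => t * u t) (Ioc 0 s)) :
    IntegrableOn (fun t => (4 * Real.pi * t) ^ (-(d:ℝ) / 2) * Real.exp (-(s / (4 * t))) * u t)
      (Ioi 0) ∧
    ∫ t in Ioi (0:ℝ), (4 * Real.pi * t) ^ (-(d:ℝ) / 2) * Real.exp (-(s / (4 * t))) * u t
      ≤ (4 ^ d * d.factorial) * s ^ (-(d:ℝ) / 2 - 1) * (∫ t in Ioc 0 s, t * u t)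
        + 2 * s ^ (-(d:ℝ) / 2 - 1) * (u s * s ^ 2) := by
  have hd' : (3:ℝ) ≤ d := by exact_mod_cast hd
  have hsub : Ioc 0 s ⊆ Ioi 0 := Ioc_subset_Ioi_self
  have hsub2 : Ioi s ⊆ Ioi 0 := Ioi_subset_Ioi hs.le
  have hm : AEStronglyMeasurable
      (fun t => (4 * Real.pi * t) ^ (-(d:ℝ) / 2) * Real.exp (-(s / (4 * t))) * u t)
      (volume.restrict (Ioi 0)) := by
    refine AEStronglyMeasurable.mul ?_ (aux_meas u hdec)
    exact (by fun_prop : Measurable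
      fun t => (4 * Real.pi * t) ^ (-(d:ℝ) / 2) * Real.exp (-(s / (4 * t)))).aestronglyMeasurable
  have hb1 : ∀ t ∈ Ioc 0 s,
      (4 * Real.pi * t) ^ (-(d:ℝ) / 2) * Real.exp (-(s / (4 * t))) * u t
      ≤ (4 ^ d * d.factorial) * s ^ (-(d:ℝ) / 2 - 1) * (t * u t) := fun t ht => by
    rw [← mul_assoc]
    exact mul_le_mul_of_nonneg_right (aux_ker d hd s t ht.1 ht.2) (hpos t ht.1).le
  have hb2 : ∀ t ∈ Ioi s,
      (4 * Real.pi * t) ^ (-(d:ℝ) / 2) * Real.exp (-(s / (4 * t))) * u t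
      ≤ t ^ (-(d:ℝ) / 2) * u s := fun t ht => by
    have ht0 : 0 < t := hsub2 ht
    have h1 : (4 * Real.pi * t) ^ (-(d:ℝ) / 2) ≤ t ^ (-(d:ℝ) / 2) := by
      refine Real.rpow_le_rpow_of_nonpos ht0 ?_ (by linarith)
      nlinarith [Real.pi_gt_three]
    have h2 : Real.exp (-(s / (4 * t))) ≤ 1 :=
      Real.exp_le_one_iff.2 (by have : 0 < s / (4 * t) := by positivity
                                linarith)
    have h3 : (4 * Real.pi * t) ^ (-(d:ℝ) / 2) * Real.exp (-(s / (4 * t)))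
        ≤ t ^ (-(d:ℝ) / 2) * 1 := by gcongr
    rw [mul_one] at h3
    exact mul_le_mul h3 (hdec s t hs (le_of_lt ht)) (hpos t ht0).le (by positivity)
  have hn : ∀ t, 0 < t →
      0 ≤ (4 * Real.pi * t) ^ (-(d:ℝ) / 2) * Real.exp (-(s / (4 * t))) * u t := fun t ht => by
    have := hpos t ht
    positivity
  have hr := integrableOn_Ioi_rpow_of_lt (a := -(d:ℝ) / 2) (c := s) (by linarith) hs
  have hI1 : IntegrableOn
      (fun t => (4 * Real.pi * t) ^ (-(d:ℝ) / 2) * Real.exp (-(s / (4 * t))) * u t)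
      (Ioc 0 s) := by
    refine Integrable.mono' (hII.const_mul ((4 ^ d * d.factorial) * s ^ (-(d:ℝ) / 2 - 1)))
      (hm.mono_measure (Measure.restrict_mono hsub le_rfl)) ?_
    refine (ae_restrict_mem measurableSet_Ioc).mono fun t ht => ?_
    rw [Real.norm_of_nonneg (hn t ht.1)]
    exact hb1 t ht
  have hI2 : IntegrableOn
      (fun t => (4 * Real.pi * t) ^ (-(d:ℝ) / 2) * Real.exp (-(s / (4 * t))) * u t)
      (Ioi s) := by
    refine Integrable.mono' (hr.mul_const (u s))
      (hm.mono_measure (Measure.restrict_mono hsub2 le_rfl)) ?_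
    refine (ae_restrict_mem measurableSet_Ioi).mono fun t ht => ?_
    rw [Real.norm_of_nonneg (hn t (hsub2 ht))]
    exact hb2 t ht
  have hI := hI1.union hI2
  rw [Ioc_union_Ioi_eq_Ioi hs.le] at hI
  refine ⟨hI, ?_⟩
  rw [← Ioc_union_Ioi_eq_Ioi hs.le,
    setIntegral_union (Ioc_disjoint_Ioi le_rfl) measurableSet_Ioi hI1 hI2]
  refine add_le_add ?_ ?_
  · rw [← integral_const_mul]
    exact setIntegral_mono_on hI1 (hII.const_mul _) measurableSet_Ioc hb1
  · refine (setIntegral_mono_on hI2 (hr.mul_const _) measurableSet_Ioi hb2).trans ?_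
    rw [integral_mul_const, integral_Ioi_rpow_of_lt (by linarith) hs]
    have e : s ^ (-(d:ℝ) / 2 + 1) = s ^ (-(d:ℝ) / 2 - 1) * s ^ 2 := by
      rw [← Real.rpow_natCast s 2, ← Real.rpow_add hs]; congr 1; push_cast; ring
    have e2 : -s ^ (-(d:ℝ) / 2 + 1) / (-(d:ℝ) / 2 + 1) ≤ 2 * s ^ (-(d:ℝ) / 2 + 1) := by
      have hp : 0 < s ^ (-(d:ℝ) / 2 + 1) := Real.rpow_pos_of_pos hs _
      rw [div_le_iff_of_neg (by linarith)]
      nlinarith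
    calc _ ≤ 2 * s ^ (-(d:ℝ) / 2 + 1) * u s :=
          mul_le_mul_of_nonneg_right e2 (hpos s hs).le
      _ = _ := by rw [e]; ring

/-- lower bound for `g`. -/
lemma aux_lower (d : ℕ) (u : ℝ → ℝ) (hpos : ∀ t, 0 < t → 0 < u t)
    (s : ℝ) (hs : 0 < s) (ε : ℝ) (hε : 0 < ε) (hε1 : ε < 1)
    (hII : IntegrableOn (fun t => t * u t) (Ioc 0 s))
    (hI : IntegrableOn
      (fun t => (4 * Real.pi * t) ^ (-(d:ℝ) / 2) * Real.exp (-(s / (4 * t))) * u t) (Ioi 0)) :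
    ((4 * Real.pi) ^ (-(d:ℝ) / 2) * Real.exp (-(1 / (4 * ε)))) * s ^ (-(d:ℝ) / 2 - 1) *
      ((∫ t in Ioc 0 s, t * u t) - ∫ t in Ioc 0 (ε * s), t * u t) ≤
    ∫ t in Ioi (0:ℝ), (4 * Real.pi * t) ^ (-(d:ℝ) / 2) * Real.exp (-(s / (4 * t))) * u t := by
  have hes : 0 < ε * s := by positivity
  have hes2 : ε * s ≤ s := by nlinarith
  have hsub : Ioc (ε * s) s ⊆ Ioc 0 s := Ioc_subset_Ioc_left hes.le
  have hsub' : Ioc (ε * s) s ⊆ Ioi 0 := hsub.trans Ioc_subset_Ioi_self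
  have hsplit : (∫ t in Ioc 0 s, t * u t) - ∫ t in Ioc 0 (ε * s), t * u t
      = ∫ t in Ioc (ε * s) s, t * u t := by
    rw [← Ioc_union_Ioc_eq_Ioc hes.le hes2, setIntegral_union (Ioc_disjoint_Ioc_of_le le_rfl)
      measurableSet_Ioc (hII.mono_set (Ioc_subset_Ioc_right hes2)) (hII.mono_set hsub)]
    ring
  rw [hsplit, ← integral_const_mul]
  calc _ ≤ ∫ t in Ioc (ε * s) s,
        (4 * Real.pi * t) ^ (-(d:ℝ) / 2) * Real.exp (-(s / (4 * t))) * u t := by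
        refine setIntegral_mono_on ((hII.mono_set hsub).const_mul _) (hI.mono_set hsub')
          measurableSet_Ioc fun t ht => ?_
        have ht0 : 0 < t := hsub' ht
        rw [← mul_assoc]
        refine mul_le_mul_of_nonneg_right ?_ (hpos t ht0).le
        have h1 : s ^ (-(d:ℝ) / 2) ≤ t ^ (-(d:ℝ) / 2) := by
          refine Real.rpow_le_rpow_of_nonpos ht0 ht.2 ?_
          have : (0:ℝ) ≤ d := Nat.cast_nonneg d
          linarith
        have h2 : Real.exp (-(1 / (4 * ε))) ≤ Real.exp (-(s / (4 * t))) := by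
          refine Real.exp_le_exp.2 (neg_le_neg ?_)
          rw [div_le_div_iff₀ (by positivity) (by positivity)]
          have := ht.1
          nlinarith
        have h3 : s ^ (-(d:ℝ) / 2 - 1) * t ≤ s ^ (-(d:ℝ) / 2) := by
          rw [Real.rpow_sub_one hs.ne', div_mul_eq_mul_div, div_le_iff₀ hs]
          have := ht.2
          gcongr
        rw [Real.mul_rpow (by positivity) ht0.le]
        calc _ = (4 * Real.pi) ^ (-(d:ℝ) / 2) * (s ^ (-(d:ℝ) / 2 - 1) * t)
                * Real.exp (-(1 / (4 * ε))) := by ring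
          _ ≤ (4 * Real.pi) ^ (-(d:ℝ) / 2) * t ^ (-(d:ℝ) / 2) * Real.exp (-(s / (4 * t))) := by
            gcongr
            exact h3.trans h1
    _ ≤ _ := by
        refine setIntegral_mono_set hI ?_ hsub'.eventuallyLE
        refine (ae_restrict_mem measurableSet_Ioi).mono fun t ht => ?_
        have ht0 : 0 < t := ht
        have := hpos t ht0
        simp only [Pi.zero_apply]
        positivity



/-- Under (A-1) with `α ∈ [0,2)` and (A-3), the Green function profile of the subordinate
Brownian motion satisfies `g(r) ≍ r^{-d-2} φ'(r⁻²)/φ(r⁻²)²` as `r → 0+`. -/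
theorem sbm_green_asymp
    (d : ℕ) (hd : 3 ≤ d)
    (α : ℝ) (hα0 : 0 ≤ α) (hα2 : α < 2)
    (μ φ φ' : ℝ → ℝ)
    (hμpos : ∀ t, 0 < t → 0 < μ t)
    (hμdec : ∀ s t, 0 < s → s ≤ t → μ t ≤ μ s)
    (hμint : IntegrableOn (fun t => min 1 t * μ t) (Ioi 0))
    (hφ : ∀ l, 0 < l → φ l = ∫ t in Ioi (0:ℝ), (1 - Real.exp (-(l * t))) * μ t)
    (hφ' : ∀ l, 0 < l → φ' l = ∫ t in Ioi (0:ℝ), t * Real.exp (-(l * t)) * μ t)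
    (hA1 : ∀ x, 0 < x →
      Tendsto (fun l => φ' (l * x) / φ' l) atTop (𝓝 (x ^ (α / 2 - 1))))
    (u : ℝ → ℝ)
    (hupos : ∀ t, 0 < t → 0 < u t)
    (hudec : ∀ s t, 0 < s → s ≤ t → u t ≤ u s)
    (hu : ∀ l, 0 < l → ∫ t in Ioi (0:ℝ), Real.exp (-(l * t)) * u t = 1 / φ l)
    (g : ℝ → ℝ)
    (hg : ∀ r, 0 < r → g r =
      ∫ t in Ioi (0:ℝ), (4 * Real.pi * t) ^ (-(d:ℝ) / 2) * Real.exp (-(r ^ 2 / (4 * t))) * u t) :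
    ∃ c C r₀ : ℝ, 0 < c ∧ c ≤ C ∧ 0 < r₀ ∧ ∀ r, 0 < r → r < r₀ →
      c * (r ^ (-(d:ℝ) - 2) * φ' (r ^ (-2 : ℝ)) / φ (r ^ (-2 : ℝ)) ^ 2) ≤ g r ∧
      g r ≤ C * (r ^ (-(d:ℝ) - 2) * φ' (r ^ (-2 : ℝ)) / φ (r ^ (-2 : ℝ)) ^ 2) := by
  have hφi := aux_phi_int μ hμpos hμdec hμint
  have hφ'i := aux_phi'_int μ hμpos hμdec hμint
  have hφpos : ∀ l, 0 < l → 0 < φ l := fun l hl => by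
    rw [hφ l hl]
    refine aux_int_pos _ (fun t ht => ?_) (hφi l hl)
    have h0 : Real.exp (-(l * t)) < 1 :=
      Real.exp_lt_one_iff.2 (by have := mul_pos hl ht; linarith)
    exact mul_pos (by linarith) (hμpos t ht)
  have hφ'pos : ∀ l, 0 < l → 0 < φ' l := fun l hl => by
    rw [hφ' l hl]
    refine aux_int_pos _ (fun t ht => ?_) (hφ'i l hl)
    have := hμpos t ht
    positivity
  have hφmono : ∀ l m, 0 < l → l ≤ m → φ l ≤ φ m := fun l m hl hlm => by
    rw [hφ l hl, hφ m (hl.trans_le hlm)]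
    refine setIntegral_mono_on (hφi l hl) (hφi m (hl.trans_le hlm)) measurableSet_Ioi
      fun t ht => ?_
    have ht : 0 < t := ht
    refine mul_le_mul_of_nonneg_right ?_ (hμpos t ht).le
    have : Real.exp (-(m * t)) ≤ Real.exp (-(l * t)) := Real.exp_le_exp.2 (by nlinarith)
    linarith
  have hUi : ∀ l, 0 < l → IntegrableOn (fun t => Real.exp (-(l * t)) * u t) (Ioi 0) :=
    fun l hl => by
      by_contra hc
      have h := hu l hl
      rw [integral_undef hc] at h
      have := hφpos l hl
      have : 0 < 1 / φ l := by positivity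
      linarith
  have hui := aux_u_int u hupos hudec hUi
  have hG : ∀ l, 0 < l → (fun l => φ' l / φ l ^ 2) l
      = ∫ t in Ioi (0:ℝ), t * Real.exp (-(l * t)) * u t := fun l hl => by
    have h1 := aux_u_deriv u hupos hudec hUi l hl
    have h2 := aux_phi_deriv μ hμpos hμdec hμint l hl
    rw [← hφ' l hl] at h2
    have h3 : HasDerivAt φ (φ' l) l := by
      refine h2.congr_of_eventuallyEq ?_
      filter_upwards [Ioi_mem_nhds hl] with x hx using hφ x hx
    have h4 : HasDerivAt (fun l => ∫ t in Ioi (0:ℝ), Real.exp (-(l * t)) * u t)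
        (-φ' l / φ l ^ 2) l := by
      refine (h3.inv (hφpos l hl).ne').congr_of_eventuallyEq ?_
      filter_upwards [Ioi_mem_nhds hl] with x hx
      rw [hu x hx, one_div]; rfl
    have h5 := h1.unique h4
    simp only
    rw [neg_div] at h5
    linarith
  have key := aux_G u _ hupos hudec hui hG
  -- choose ε
  have hp : 0 < 1 - α / 2 := by linarith
  obtain ⟨ε, hε, hε1, hεs⟩ : ∃ ε : ℝ, 0 < ε ∧ ε < 1 ∧ ε ^ (1 - α / 2) < 1 / 20 := by
    have h1 : Tendsto (fun x : ℝ => x ^ (1 - α / 2)) (𝓝[>] 0) (𝓝 0) := by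
      have := (Real.continuousAt_rpow_const 0 (1 - α / 2) (Or.inr hp.le)).tendsto
      rw [Real.zero_rpow hp.ne'] at this
      exact this.mono_left nhdsWithin_le_nhds
    have h2 := h1.eventually (gt_mem_nhds (by norm_num : (0:ℝ) < 1 / 20))
    have h3 : ∀ᶠ x : ℝ in 𝓝[>] 0, x < 1 :=
      (gt_mem_nhds (by norm_num : (0:ℝ) < 1)).filter_mono nhdsWithin_le_nhds
    obtain ⟨ε, a, b, c⟩ := (h2.and (h3.and self_mem_nhdsWithin)).exists
    exact ⟨ε, c, b, a⟩
  have hlim := hA1 (1 / ε) (by positivity)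
  have hev : ∀ᶠ l in atTop, φ' (l * (1 / ε)) / φ' l < 1 / 20 := by
    refine hlim.eventually (gt_mem_nhds ?_)
    rw [one_div, Real.inv_rpow hε.le, ← Real.rpow_neg hε.le]
    rwa [neg_sub]
  obtain ⟨L, hL⟩ := eventually_atTop.1 hev
  set L' := max L 1 with hL'
  have hL'1 : 1 ≤ L' := le_max_right _ _
  set c := ((4 * Real.pi) ^ (-(d:ℝ) / 2) * Real.exp (-(1 / (4 * ε)))) / 10 with hc
  have hcpos : 0 < c := by positivity
  set A : ℝ := 4 ^ d * d.factorial with hA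
  have hApos : 0 < A := by positivity
  refine ⟨c, 3 * A + 12 + c, 1 / L', hcpos, by linarith, by positivity, fun r hr hrL => ?_⟩
  set s := r ^ 2 with hs'
  have hs : 0 < s := by positivity
  have hr1 : r ^ (-2 : ℝ) = 1 / s := by
    rw [Real.rpow_neg hr.le, one_div]; norm_num [hs']
  have hr2 : r ^ (-(d:ℝ) - 2) = s ^ (-(d:ℝ) / 2 - 1) := by
    rw [hs', ← Real.rpow_natCast r 2, ← Real.rpow_mul hr.le]; congr 1; push_cast; ring
  have hLs : L ≤ 1 / s := by
    have h1 : r * L' < 1 := by rwa [lt_div_iff₀ (by linarith)] at hrL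
    have h2 : r < 1 := by nlinarith
    refine (le_max_left L 1).trans ?_
    rw [← hL', le_div_iff₀ hs, hs']
    nlinarith
  have hs1 : 0 < 1 / s := by positivity
  rw [hg r hr, hr1, hr2, mul_div_assoc]
  obtain ⟨k1, k2, k3, k4⟩ := key s hs
  obtain ⟨-, j2, -, -⟩ := key (ε * s) (by positivity)
  obtain ⟨hgi, hgu⟩ := aux_upper d hd u hupos hudec s hs k1
  have hgl := aux_lower d u hupos s hs ε hε hε1 k1 hgi
  have hGpos : 0 < φ' (1 / s) / φ (1 / s) ^ 2 :=
    div_pos (hφ'pos _ hs1) (pow_pos (hφpos _ hs1) 2)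
  have hGs : φ' (1 / (ε * s)) / φ (1 / (ε * s)) ^ 2 ≤ 1 / 20 * (φ' (1 / s) / φ (1 / s) ^ 2) := by
    have h1 := (hL _ hLs).le
    rw [div_le_iff₀ (hφ'pos _ hs1)] at h1
    have e : 1 / s * (1 / ε) = 1 / (ε * s) := by field_simp
    rw [e] at h1
    have h2 : φ (1 / s) ≤ φ (1 / (ε * s)) := by
      refine hφmono _ _ hs1 ?_
      exact one_div_le_one_div_of_le (by positivity) (by nlinarith)
    have h3 := hφpos _ hs1
    have h4 := hφ'pos _ hs1
    calc _ ≤ 1 / 20 * φ' (1 / s) / φ (1 / s) ^ 2 := by gcongr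
      _ = _ := by ring
  set Gs := φ' (1 / s) / φ (1 / s) ^ 2
  set P := s ^ (-(d:ℝ) / 2 - 1)
  have hP : 0 < P := Real.rpow_pos_of_pos hs _
  set I := ∫ t in Ioc 0 s, t * u t
  set J := ∫ t in Ioc 0 (ε * s), t * u t
  constructor
  · refine le_trans ?_ hgl
    have : Gs / 10 ≤ I - J := by linarith
    calc c * (P * Gs) = (10 * c) * P * (Gs / 10) := by ring
      _ ≤ (10 * c) * P * (I - J) := by gcongr
      _ = _ := by rw [hc]; ring
  · refine hgu.trans ?_
    have h1 : A * P * I ≤ A * P * (3 * Gs) := by gcongr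
    have h2 : 2 * P * (u s * s ^ 2) ≤ 2 * P * (6 * Gs) :=
      mul_le_mul_of_nonneg_left (by linarith) (by positivity)
    have h3 : 0 < c * (P * Gs) := by positivity
    nlinarith
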